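/- arXiv:1012.4146 — 2 statements merged into one kernel-verified Lean document; each statement's English description precedes it below -/
import Mathlib

section
/- Let 1 ≤ n ≤ 8 and let ξ ∈ L_n satisfy ξ·ξ = −1 and K_0·ξ = −1. Then there exists a finite composition φ of reflections taken from {R(E_i − E_j) : i ≠ j} ∪ {Γ_{ijk} : i, j, k distinct} such that φ(ξ) = E_i for some i, or φ(ξ) = H − E_i − E_j for some i ≠ j. Moreover, if n ≠ 2, then φ can be chosen so that φ(ξ) = E_i for some i. -/
/-!
Write `ξ = aH - ∑ mᵢEᵢ`. The two hypotheses say `∑ mᵢ² = a² + 1` and `∑ mᵢ = 3a - 1`, and are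
preserved by every reflection along a `(-2)`-class orthogonal to `K₀`, in particular by every
ternary reflection `Γ_{ijk}`, which replaces `a` by `2a - (mᵢ + mⱼ + mₖ)`.

For `n ≤ 8`, Cauchy–Schwarz and integrality give `a ≥ 0` (`deg_nonneg`), and if `a = 0` then `ξ` is
some `Eᵢ` (`eq_E_of_deg_zero`). If `a ≥ 1` and `n ≥ 3`, then all `mᵢ ≥ 0` by Cauchy–Schwarz again,
and the three largest multiplicities have sum greater than `a` (Noether's inequality, `noether`).
So `Γ_{ijk}` lowers `a`, and induction on `a` ends at `a = 0` (`descent`). For `n ≤ 2` the two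
equations leave only `a = 0`, or `n = 2` and `ξ = H - E₁ - E₂`. Binary reflections are not needed.
-/

namespace LiWuRational

/-- The intersection pairing on the lattice `L_n` of `CP² # n(conj CP²)`:
coordinate `0` is the `H`-coefficient, coordinate `i+1` is the coefficient of `E_{i+1}`. -/
def form (n : ℕ) (x y : Fin (n + 1) → ℤ) : ℤ :=
  x 0 * y 0 - ∑ i : Fin n, x i.succ * y i.succ

/-- The hyperplane class `H`. -/
def H (n : ℕ) : Fin (n + 1) → ℤ := fun j => if (j : ℕ) = 0 then 1 else 0

/-- The exceptional class `E_{i+1}` (0-based index `i < n`). -/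
def E (n : ℕ) (i : ℕ) : Fin (n + 1) → ℤ := fun j => if (j : ℕ) = i + 1 then 1 else 0

/-- The standard canonical class `K_0 = -3H + E_1 + ⋯ + E_n`. -/
def K0 (n : ℕ) : Fin (n + 1) → ℤ := fun j => if (j : ℕ) = 0 then -3 else 1

/-- The reflection along `γ`: `R(γ)(β) = β - (2(γ·β)/(γ·γ)) γ`. -/
def refl (n : ℕ) (γ β : Fin (n + 1) → ℤ) : Fin (n + 1) → ℤ :=
  β - (2 * form n γ β / form n γ γ) • γ

/-- Binary classes `E_i - E_j`, `i ≠ j`. -/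
def IsBinary (n : ℕ) (γ : Fin (n + 1) → ℤ) : Prop :=
  ∃ i j : ℕ, i < n ∧ j < n ∧ i ≠ j ∧ γ = E n i - E n j

/-- Ternary classes `H - E_i - E_j - E_k`, with `i, j, k` distinct. -/
def IsTernary (n : ℕ) (γ : Fin (n + 1) → ℤ) : Prop :=
  ∃ i j k : ℕ, i < n ∧ j < n ∧ k < n ∧ i ≠ j ∧ i ≠ k ∧ j ≠ k ∧
    γ = H n - E n i - E n j - E n k

/-! ### The intersection form and ternary reflections -/

section Forms

variable {n : ℕ}

lemma form_add_left (x y z : Fin (n + 1) → ℤ) : form n (x + y) z = form n x z + form n y z := by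
  simp only [form, Pi.add_apply, add_mul, Finset.sum_add_distrib]; ring

lemma form_smul_left (c : ℤ) (x z : Fin (n + 1) → ℤ) : form n (c • x) z = c * form n x z := by
  simp only [form, Pi.smul_apply, smul_eq_mul, mul_sub, Finset.mul_sum, mul_assoc]

lemma form_comm (x y : Fin (n + 1) → ℤ) : form n x y = form n y x := by
  simp only [form, mul_comm]

lemma form_add_right (x y z : Fin (n + 1) → ℤ) : form n x (y + z) = form n x y + form n x z := by
  rw [form_comm, form_add_left, form_comm y, form_comm z]

lemma form_smul_right (c : ℤ) (x z : Fin (n + 1) → ℤ) : form n x (c • z) = c * form n x z := by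
  rw [form_comm, form_smul_left, form_comm]

lemma form_ternary (i j k : Fin n) (x : Fin (n + 1) → ℤ) :
    form n (H n - E n i - E n j - E n k) x = x 0 + x i.succ + x j.succ + x k.succ := by
  simp [form, H, E, Fin.val_inj, sub_mul, Finset.sum_sub_distrib]
  ring

lemma form_ternary_self (i j k : Fin n) (hij : i ≠ j) (hik : i ≠ k) (hjk : j ≠ k) :
    form n (H n - E n i - E n j - E n k) (H n - E n i - E n j - E n k) = -2 := by
  rw [form_ternary]
  simp [H, E, Fin.val_inj, hij, hik, hjk, hij.symm, hik.symm, hjk.symm]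

lemma form_K0_ternary (i j k : Fin n) :
    form n (K0 n) (H n - E n i - E n j - E n k) = 0 := by
  rw [form_comm, form_ternary]
  simp [K0]

lemma refl_of_self (γ β : Fin (n + 1) → ℤ) (h : form n γ γ = -2) :
    refl n γ β = β + form n γ β • γ := by
  have h2 : 2 * form n γ β / form n γ γ = -form n γ β := by rw [h]; omega
  rw [refl, h2]; simp

end Forms

/-! ### Inequalities for degree and multiplicities -/

section Numerics

variable {n : ℕ} {a : ℤ} {b : Fin n → ℤ}

/-- The degree `a` is nonnegative. Here and in the next three lemmas `b i = -mᵢ` is the coefficient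
of `Eᵢ` in `ξ`. -/
lemma deg_nonneg (hn : n ≤ 8) (h2 : ∑ i, b i ^ 2 = a ^ 2 + 1) (h1 : ∑ i, b i = 1 - 3 * a) :
    0 ≤ a := by
  have hcs := sq_sum_le_card_mul_sum_sq (s := Finset.univ) (f := b)
  rw [h1, h2, Finset.card_univ, Fintype.card_fin] at hcs
  have hn' : (n : ℤ) ≤ 8 := by exact_mod_cast hn
  have hb : ∑ i, b i ≤ ∑ i, b i ^ 2 := Finset.sum_le_sum fun i _ => Int.le_self_sq (b i)
  rw [h1, h2] at hb
  -- Cauchy–Schwarz gives `(a - 7) (a + 1) ≤ 0`, and `hb` excludes `a = -1`.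
  have : (1 - 3 * a) ^ 2 ≤ 8 * (a ^ 2 + 1) := hcs.trans (by gcongr)
  have : -1 ≤ a := by nlinarith
  by_contra hlt
  obtain rfl : a = -1 := by omega
  norm_num at hb

lemma single_of_sums (h2 : ∑ i, b i ^ 2 = 1) (h1 : ∑ i, b i = 1) :
    ∃ i, b i = 1 ∧ ∀ j, j ≠ i → b j = 0 := by
  have hz : ∑ i, (b i ^ 2 - b i) = 0 := by rw [Finset.sum_sub_distrib, h1, h2]; rfl
  rw [Finset.sum_eq_zero_iff_of_nonneg
    fun i _ => sub_nonneg.2 (Int.le_self_sq (b i))] at hz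
  have h01 : ∀ i, b i = 0 ∨ b i = 1 := by
    intro i
    have h : b i * (b i - 1) = 0 := by linear_combination hz i (Finset.mem_univ i)
    rcases mul_eq_zero.1 h with h | h
    · exact Or.inl h
    · exact Or.inr (by omega)
  obtain ⟨i, -, hi⟩ := Finset.exists_ne_zero_of_sum_ne_zero (s := Finset.univ) (f := b) (by omega)
  have hi1 : b i = 1 := (h01 i).resolve_left hi
  refine ⟨i, hi1, fun j hj => ?_⟩
  have hs := Finset.add_sum_erase Finset.univ b (Finset.mem_univ i)
  have h0 : ∑ j ∈ Finset.univ.erase i, b j = 0 := by omega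
  rw [Finset.sum_eq_zero_iff_of_nonneg
    fun j _ => by rcases h01 j with h | h <;> omega] at h0
  exact h0 j (by simp [hj])

/-- All multiplicities `mⱼ = -b j` are nonnegative once the degree is positive. -/
lemma mult_nonneg (hn : n ≤ 8) (ha : 1 ≤ a) (h2 : ∑ i, b i ^ 2 = a ^ 2 + 1)
    (h1 : ∑ i, b i = 1 - 3 * a) (j : Fin n) : b j ≤ 0 := by
  by_contra! hj
  -- The other at most seven coefficients have sum at most `-3a` and square sum at most `a²`.
  have hcs := sq_sum_le_card_mul_sum_sq (s := Finset.univ.erase j) (f := b)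
  have e1 := Finset.add_sum_erase Finset.univ b (Finset.mem_univ j)
  have e2 := Finset.add_sum_erase Finset.univ (fun i => b i ^ 2) (Finset.mem_univ j)
  rw [Finset.card_erase_of_mem (Finset.mem_univ j), Finset.card_univ, Fintype.card_fin] at hcs
  have hc : ((n - 1 : ℕ) : ℤ) ≤ 7 := by omega
  have hS : 0 ≤ ∑ i ∈ Finset.univ.erase j, b i ^ 2 := Finset.sum_nonneg fun i _ => sq_nonneg _
  have h7 := hcs.trans (mul_le_mul_of_nonneg_right hc hS)
  nlinarith

/-- Noether's inequality: some three multiplicities have sum exceeding the degree. -/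
lemma noether (hn3 : 3 ≤ n) (hn : n ≤ 8) (ha : 1 ≤ a) (h2 : ∑ i, b i ^ 2 = a ^ 2 + 1)
    (h1 : ∑ i, b i = 1 - 3 * a) :
    ∃ i j k : Fin n, i ≠ j ∧ i ≠ k ∧ j ≠ k ∧ a + b i + b j + b k < 0 := by
  have hneg := mult_nonneg hn ha h2 h1
  have hcard : (Finset.univ : Finset (Fin n)).card = n := by simp
  obtain ⟨i, hi, hi'⟩ := Finset.exists_min_image (Finset.univ : Finset (Fin n)) b
    (Finset.card_pos.1 (by omega))
  have hcard1 := Finset.card_erase_of_mem hi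
  obtain ⟨j, hj, hj'⟩ := Finset.exists_min_image (Finset.univ.erase i) b
    (Finset.card_pos.1 (by omega))
  have hcard2 := Finset.card_erase_of_mem hj
  obtain ⟨k, hk, hk'⟩ := Finset.exists_min_image ((Finset.univ.erase i).erase j) b
    (Finset.card_pos.1 (by omega))
  have hkj : k ≠ j := Finset.ne_of_mem_erase hk
  have hki : k ≠ i := Finset.ne_of_mem_erase (Finset.mem_of_mem_erase hk)
  have hji : j ≠ i := Finset.ne_of_mem_erase hj
  refine ⟨i, j, k, hji.symm, hki.symm, hkj.symm, ?_⟩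
  by_contra! hcon
  -- With `t = mₖ` the third largest multiplicity, only `i` and `j` contribute positively to
  -- `∑ m (m - t) = a² + 1 - t (3a - 1)`.
  have e : ∑ l, b l * (b l - b k) = a ^ 2 + 1 - b k * (1 - 3 * a) := by
    rw [← h1, ← h2, Finset.mul_sum, ← Finset.sum_sub_distrib]
    exact Finset.sum_congr rfl fun l _ => by ring
  rw [← Finset.add_sum_erase _ _ hi, ← Finset.add_sum_erase _ _ hj] at e
  have hrest : ∑ l ∈ (Finset.univ.erase i).erase j, b l * (b l - b k) ≤ 0 :=
    Finset.sum_nonpos fun l hl =>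
      mul_nonpos_of_nonpos_of_nonneg (hneg l) (sub_nonneg.2 (hk' l hl))
  have hp : b i ≤ b k := hi' k (Finset.mem_univ k)
  have hq : b j ≤ b k := hj' k (Finset.mem_of_mem_erase hk)
  have ht : b k ≤ 0 := hneg k
  obtain ⟨p, hpe⟩ : ∃ p, p = b k - b i := ⟨_, rfl⟩
  obtain ⟨q, hqe⟩ : ∃ q, q = b k - b j := ⟨_, rfl⟩
  obtain ⟨t, hte⟩ : ∃ t, t = -b k := ⟨_, rfl⟩
  have hbi : b i = -t - p := by omega
  have hbj : b j = -t - q := by omega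
  have hbk : b k = -t := by omega
  rw [hbi, hbj, hbk] at e
  have hp0 : 0 ≤ p := by omega
  have hq0 : 0 ≤ q := by omega
  have ht0 : 0 ≤ t := by omega
  have hpq : p + q ≤ a - 3 * t := by omega
  have hpq2 : (p + q) ^ 2 ≤ (a - 3 * t) ^ 2 := by gcongr
  have hpqt : t * (p + q) ≤ t * (a - 3 * t) := by gcongr
  have hpq0 : 0 ≤ p * q := mul_nonneg hp0 hq0
  have hta : 0 ≤ t * (a - 3 * t) := mul_nonneg ht0 (by omega)
  rw [hbk] at hrest
  nlinarith

end Numerics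

/-! ### Descent on the degree -/

section Descent

variable {n : ℕ} {ξ : Fin (n + 1) → ℤ}

lemma sum_sq_of_form (hsq : form n ξ ξ = -1) : ∑ i : Fin n, ξ i.succ ^ 2 = ξ 0 ^ 2 + 1 := by
  simp only [form, ← sq] at hsq
  omega

lemma sum_of_form (hK : form n (K0 n) ξ = -1) : ∑ i : Fin n, ξ i.succ = 1 - 3 * ξ 0 := by
  simp [form, K0] at hK
  omega

lemma eq_E_of_deg_zero (hsq : form n ξ ξ = -1) (hK : form n (K0 n) ξ = -1) (h0 : ξ 0 = 0) :
    ∃ i : ℕ, i < n ∧ ξ = E n i := by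
  have h2 := sum_sq_of_form hsq
  have h1 := sum_of_form hK
  rw [h0] at h1 h2
  obtain ⟨i, hi, hj⟩ := single_of_sums (b := fun i => ξ i.succ) (by simpa using h2)
    (by simpa using h1)
  refine ⟨i, i.2, funext fun l => ?_⟩
  refine Fin.cases ?_ (fun l => ?_) l
  · simp [E, h0]
  · by_cases h : l = i
    · subst h; simpa [E] using hi
    · simpa [E, Fin.val_inj, h] using hj l h

lemma foldr_comp_append {α : Type*} (l : List (α → α)) (f : α → α) (x : α) :
    (l ++ [f]).foldr (· ∘ ·) id x = l.foldr (· ∘ ·) id (f x) := by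
  induction l with
  | nil => rfl
  | cons g l ih => simpa using congrArg g ih

lemma descent (hn3 : 3 ≤ n) (hn : n ≤ 8) (d : ℕ) : ∀ ξ : Fin (n + 1) → ℤ, ξ 0 ≤ d →
    form n ξ ξ = -1 → form n (K0 n) ξ = -1 →
    ∃ l : List ((Fin (n + 1) → ℤ) → (Fin (n + 1) → ℤ)),
      (∀ f ∈ l, ∃ γ, (IsBinary n γ ∨ IsTernary n γ) ∧ f = refl n γ) ∧
      ∃ i : ℕ, i < n ∧ l.foldr (· ∘ ·) id ξ = E n i := by
  induction d with
  | zero =>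
    intro ξ hd hsq hK
    have h0 := deg_nonneg hn (sum_sq_of_form hsq) (sum_of_form hK)
    exact ⟨[], by simp, eq_E_of_deg_zero hsq hK (le_antisymm (by simpa using hd) h0)⟩
  | succ d ih =>
    intro ξ hd hsq hK
    by_cases ha : ξ 0 ≤ d
    · exact ih ξ ha hsq hK
    obtain ⟨i, j, k, hij, hik, hjk, hlt⟩ :=
      noether hn3 hn (by omega) (sum_sq_of_form hsq) (sum_of_form hK)
    obtain ⟨γ, hγ⟩ : ∃ γ, γ = H n - E n i - E n j - E n k := ⟨_, rfl⟩
    have hself : form n γ γ = -2 := hγ ▸ form_ternary_self i j k hij hik hjk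
    have hKγ : form n (K0 n) γ = 0 := hγ ▸ form_K0_ternary i j k
    have hr := refl_of_self γ ξ hself
    have hdeg : form n γ ξ < 0 := by rw [hγ, form_ternary]; exact hlt
    have hγ0 : γ 0 = 1 := by simp [hγ, H, E]
    obtain ⟨l, hl, hE⟩ := ih (refl n γ ξ)
      (by
        rw [hr]
        simp only [Pi.add_apply, Pi.smul_apply, hγ0, smul_eq_mul, mul_one]
        push_cast at hd
        omega)
      (by
        rw [hr]
        simp only [form_add_left, form_add_right, form_smul_left, form_smul_right, hself, hsq,
          form_comm ξ γ]
        ring)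
      (by rw [hr, form_add_right, form_smul_right, hKγ, hK]; ring)
    refine ⟨l ++ [refl n γ], fun f hf => ?_, by simpa only [foldr_comp_append] using hE⟩
    rcases List.mem_append.1 hf with hf | hf
    · exact hl f hf
    · exact ⟨γ, Or.inr ⟨i, j, k, i.2, j.2, k.2, by simpa [Fin.val_inj] using hij,
        by simpa [Fin.val_inj] using hik, by simpa [Fin.val_inj] using hjk, hγ⟩, by simpa using hf⟩

end Descent

theorem stmt1 (n : ℕ) (hn1 : 1 ≤ n) (hn8 : n ≤ 8) (ξ : Fin (n + 1) → ℤ)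
    (hsq : form n ξ ξ = -1) (hK : form n (K0 n) ξ = -1) :
    (∃ l : List ((Fin (n + 1) → ℤ) → (Fin (n + 1) → ℤ)),
      (∀ f ∈ l, ∃ γ, (IsBinary n γ ∨ IsTernary n γ) ∧ f = refl n γ) ∧
      ((∃ i : ℕ, i < n ∧ l.foldr (· ∘ ·) id ξ = E n i) ∨
       (∃ i j : ℕ, i < n ∧ j < n ∧ i ≠ j ∧
          l.foldr (· ∘ ·) id ξ = H n - E n i - E n j))) ∧
    (n ≠ 2 →
      ∃ l : List ((Fin (n + 1) → ℤ) → (Fin (n + 1) → ℤ)),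
        (∀ f ∈ l, ∃ γ, (IsBinary n γ ∨ IsTernary n γ) ∧ f = refl n γ) ∧
        ∃ i : ℕ, i < n ∧ l.foldr (· ∘ ·) id ξ = E n i) := by
  have h2 := sum_sq_of_form hsq
  have h1 := sum_of_form hK
  have h0 := deg_nonneg hn8 h2 h1
  have key : n ≠ 2 →
      ∃ l : List ((Fin (n + 1) → ℤ) → (Fin (n + 1) → ℤ)),
        (∀ f ∈ l, ∃ γ, (IsBinary n γ ∨ IsTernary n γ) ∧ f = refl n γ) ∧
        ∃ i : ℕ, i < n ∧ l.foldr (· ∘ ·) id ξ = E n i := by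
    intro hne
    by_cases hn3 : 3 ≤ n
    · exact descent hn3 hn8 (ξ 0).toNat ξ (Int.self_le_toNat _) hsq hK
    · obtain rfl : n = 1 := by omega
      simp only [Fin.sum_univ_one] at h1 h2
      -- The two equations combine to `8a² = 6a`, whose only integer root is `0`.
      have ha : ξ 0 = 0 := by
        rw [h1] at h2
        have : ξ 0 < 1 := by nlinarith
        omega
      exact ⟨[], by simp, eq_E_of_deg_zero hsq hK ha⟩
  refine ⟨?_, key⟩
  by_cases hne : n = 2
  · subst hne
    refine ⟨[], by simp, ?_⟩
    by_cases ha : ξ 0 = 0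
    · exact Or.inl (eq_E_of_deg_zero hsq hK ha)
    · right
      simp only [Fin.sum_univ_two] at h1 h2
      have ha1 : ξ 0 = 1 := by
        have : ξ 0 < 2 := by
          nlinarith [sq_nonneg (ξ (Fin.succ 0) - ξ (Fin.succ 1)),
            congrArg (· ^ 2) h1]
        omega
      rw [ha1] at h1 h2
      have hx : ξ (Fin.succ 0) = -1 := by nlinarith
      have hy : ξ (Fin.succ 1) = -1 := by omega
      refine ⟨0, 1, by norm_num, by norm_num, by norm_num, funext fun l => ?_⟩
      fin_cases l
      · simpa [H, E] using ha1
      · simpa [H, E] using hx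
      · simpa [H, E] using hy
  · obtain ⟨l, hl, hE⟩ := key hne
    exact ⟨l, hl, Or.inl hE⟩

end LiWuRational
end

section
/- A class ξ ∈ L satisfies ξ·F = 0, ξ·ξ = −2 and K_0·ξ = 0 if and only if ξ = ±(E_i − E_j) or ξ = ±(F − E_i − E_j) for some indices i ≠ j. -/
/-! Write `ξ = a T + b F + ∑ c_k E_k`.  The three conditions read `a = 0`, `∑ c_k ^ 2 = 2` and
`∑ c_k = -2 b`.  A sum of integer squares equals `2` only if exactly two of the `c_k` are `±1` and
all others vanish (`two_squares_support`).  Opposite signs force `b = 0` and give `±(E_i - E_j)`;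
a common sign `ε` forces `b = -ε` and gives `-ε (F - E_i - E_j)`. -/

namespace LiWuRuled

/-- The intersection pairing on the lattice `L` of `(Σ_h × S²) # n(conj CP²)`:
coordinate `0` is the `T`-coefficient, coordinate `1` the `F`-coefficient, and
coordinate `i+2` the coefficient of `E_{i+1}`.  `T·F = 1`, `T² = F² = 0`,
`T·E_i = F·E_i = 0`, `E_i·E_j = -δ_{ij}`. -/
def form (n : ℕ) (x y : Fin (n + 2) → ℤ) : ℤ :=
  x 0 * y 1 + x 1 * y 0 - ∑ i : Fin n, x i.succ.succ * y i.succ.succ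

/-- The section class `T`. -/
def T (n : ℕ) : Fin (n + 2) → ℤ := fun j => if (j : ℕ) = 0 then 1 else 0

/-- The fiber class `F`. -/
def F (n : ℕ) : Fin (n + 2) → ℤ := fun j => if (j : ℕ) = 1 then 1 else 0

/-- The exceptional class `E_{i+1}` (0-based index `i < n`). -/
def E (n : ℕ) (i : ℕ) : Fin (n + 2) → ℤ := fun j => if (j : ℕ) = i + 2 then 1 else 0

/-- The standard canonical class `K_0 = -2T + (2h-2)F + E_1 + ⋯ + E_n`. -/
def K0 (n : ℕ) (h : ℤ) : Fin (n + 2) → ℤ :=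
  fun j => if (j : ℕ) = 0 then -2 else if (j : ℕ) = 1 then 2 * h - 2 else 1

/-- The reflection along `γ`: `R(γ)(β) = β - (2(γ·β)/(γ·γ)) γ`. -/
def refl (n : ℕ) (γ β : Fin (n + 2) → ℤ) : Fin (n + 2) → ℤ :=
  β - (2 * form n γ β / form n γ γ) • γ

theorem F_zero (n : ℕ) : F n 0 = 0 := by simp [F]

theorem F_one (n : ℕ) : F n 1 = 1 := by simp [F]

theorem F_succ_succ (n : ℕ) (k : Fin n) : F n k.succ.succ = 0 := by simp [F]

theorem E_zero (n i : ℕ) : E n i 0 = 0 := by simp [E]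

theorem E_one (n i : ℕ) : E n i 1 = 0 := by simp [E]

theorem E_succ_succ (n : ℕ) (i k : Fin n) :
    E n i k.succ.succ = if k = i then 1 else 0 := by
  simp [E, Fin.ext_iff]

theorem form_F (n : ℕ) (ξ : Fin (n + 2) → ℤ) : form n ξ (F n) = ξ 0 := by
  simp [form, F_zero, F_one, F_succ_succ]

theorem form_K0 (n : ℕ) (h : ℤ) (ξ : Fin (n + 2) → ℤ) :
    form n (K0 n h) ξ = -2 * ξ 1 + (2 * h - 2) * ξ 0 - ∑ k : Fin n, ξ k.succ.succ := by
  simp [form, K0]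

/-- If a finite sum of integer squares is `1` or `2`, some term is `±1`. -/
theorem exists_unit_term {ι : Type*} (s : Finset ι) (c : ι → ℤ)
    (h1 : 1 ≤ ∑ k ∈ s, c k * c k) (h2 : ∑ k ∈ s, c k * c k ≤ 2) :
    ∃ i ∈ s, c i = 1 ∨ c i = -1 := by
  obtain ⟨i, hi, hne⟩ := Finset.exists_ne_zero_of_sum_ne_zero (s := s)
    (f := fun k => c k * c k) (by omega)
  have hle := Finset.single_le_sum (f := fun k => c k * c k)
    (fun k _ => mul_self_nonneg (c k)) hi
  have hc : c i * c i ≤ 2 := hle.trans h2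
  have hub : c i ≤ 1 := by nlinarith
  have hlb : -1 ≤ c i := by nlinarith
  have h0 : c i ≠ 0 := fun h => hne (by simp [h])
  exact ⟨i, hi, by omega⟩

/-- An integer vector of squared norm `2` has exactly two nonzero entries, both `±1`. -/
theorem two_squares_support {ι : Type*} [Fintype ι] [DecidableEq ι] (c : ι → ℤ)
    (hc : ∑ k, c k * c k = 2) :
    ∃ i j, i ≠ j ∧ (c i = 1 ∨ c i = -1) ∧ (c j = 1 ∨ c j = -1) ∧
      ∀ k, k ≠ i ∧ k ≠ j → c k = 0 := by
  obtain ⟨i, hi, hci⟩ := exists_unit_term Finset.univ c (by omega) (by omega)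
  have hi1 : c i * c i = 1 := by rcases hci with h | h <;> simp [h]
  have e1 := Finset.add_sum_erase _ (fun k => c k * c k) hi
  obtain ⟨j, hj, hcj⟩ := exists_unit_term (Finset.univ.erase i) c (by omega) (by omega)
  have hj1 : c j * c j = 1 := by rcases hcj with h | h <;> simp [h]
  have e2 := Finset.add_sum_erase _ (fun k => c k * c k) hj
  have e3 : ∑ k ∈ (Finset.univ.erase i).erase j, c k * c k = 0 := by omega
  rw [Finset.sum_eq_zero_iff_of_nonneg (fun k _ => mul_self_nonneg (c k))] at e3
  refine ⟨i, j, (Finset.ne_of_mem_erase hj).symm, hci, hcj, fun k hk => ?_⟩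
  exact mul_self_eq_zero.mp (e3 k (by simp [hk.1, hk.2]))

theorem stmt4 (n : ℕ) (hn : 1 ≤ n) (h : ℤ) (ξ : Fin (n + 2) → ℤ) :
    (form n ξ (F n) = 0 ∧ form n ξ ξ = -2 ∧ form n (K0 n h) ξ = 0) ↔
    (∃ i j : ℕ, i < n ∧ j < n ∧ i ≠ j ∧
      (ξ = E n i - E n j ∨ ξ = -(E n i - E n j) ∨
       ξ = F n - E n i - E n j ∨ ξ = -(F n - E n i - E n j))) := by
  rw [form_F, form_K0]
  constructor
  · rintro ⟨h0, hsq, hK⟩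
    have hc : ∑ k : Fin n, ξ k.succ.succ * ξ k.succ.succ = 2 := by
      simp only [form, h0] at hsq
      linarith
    obtain ⟨i, j, hij, hi, hj, hk⟩ := two_squares_support (fun k : Fin n => ξ k.succ.succ) hc
    have hsum : ∑ k : Fin n, ξ k.succ.succ = ξ i.succ.succ + ξ j.succ.succ :=
      Fintype.sum_eq_add i j hij hk
    rw [hsum, h0] at hK
    refine ⟨i, j, i.2, j.2, fun h => hij (Fin.ext h), ?_⟩
    -- A class in `L` is determined by its coefficients.
    have key : ∀ η : Fin (n + 2) → ℤ, η 0 = 0 → η 1 = ξ 1 →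
        (∀ k : Fin n, η k.succ.succ = ξ k.succ.succ) → ξ = η := by
      intro η a b c
      funext m
      refine Fin.cases (by rw [h0, a]) (fun m => ?_) m
      exact Fin.cases b.symm (fun k => (c k).symm) m
    rcases hi with hi | hi <;> rcases hj with hj | hj <;> simp only [hi, hj] at hK
    · right; right; right
      apply key
      · simp [E_zero, F_zero]
      · simp only [Pi.neg_apply, Pi.sub_apply, E_one, F_one]; omega
      · intro k
        have := hk k
        simp only [Pi.neg_apply, Pi.sub_apply, E_succ_succ, F_succ_succ]
        grind
    · left
      apply key
      · simp [E_zero]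
      · simp only [Pi.sub_apply, E_one]; omega
      · intro k
        have := hk k
        simp only [Pi.sub_apply, E_succ_succ]
        grind
    · right; left
      apply key
      · simp [E_zero]
      · simp only [Pi.neg_apply, Pi.sub_apply, E_one]; omega
      · intro k
        have := hk k
        simp only [Pi.neg_apply, Pi.sub_apply, E_succ_succ]
        grind
    · right; right; left
      apply key
      · simp [E_zero, F_zero]
      · simp only [Pi.sub_apply, E_one, F_one]; omega
      · intro k
        have := hk k
        simp only [Pi.sub_apply, E_succ_succ, F_succ_succ]
        grind
  · rintro ⟨i, j, hi, hj, hij, hξ⟩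
    lift i to Fin n using hi
    lift j to Fin n using hj
    have hij : i ≠ j := fun h => hij (by rw [h])
    have hk : ∀ k : Fin n, k ≠ i ∧ k ≠ j → ξ k.succ.succ = 0 := by
      intro k hk
      rcases hξ with rfl | rfl | rfl | rfl <;> simp [E_succ_succ, F_succ_succ, hk.1, hk.2]
    have hsum : ∑ k : Fin n, ξ k.succ.succ = ξ i.succ.succ + ξ j.succ.succ :=
      Fintype.sum_eq_add i j hij hk
    have hsq : ∑ k : Fin n, ξ k.succ.succ * ξ k.succ.succ =
        ξ i.succ.succ * ξ i.succ.succ + ξ j.succ.succ * ξ j.succ.succ :=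
      Fintype.sum_eq_add i j hij (fun k h => by simp [hk k h])
    rw [form, hsum, hsq]
    rcases hξ with rfl | rfl | rfl | rfl <;>
      simp [E_succ_succ, F_succ_succ, E_zero, E_one, F_zero, F_one, hij, hij.symm]

end LiWuRuled
end
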